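/- arXiv:2312.07257 — 2 statements merged into one kernel-verified Lean document; each statement's English description precedes it below -/
import Mathlib

section
/- Let H, K, G, G' be complex Hilbert spaces, let A ∈ B(H,K), and let V_A ∈ B(H,K) be the unique operator with |A*|^{1/2} V_A = A and range V_A ⊆ closure(range A). Suppose T₂₁ ∈ B(G,K) satisfies range T₂₁ ⊆ range(|A*|^{1/2}) and T₁₂* ∈ B(G',H) satisfies range T₁₂* ⊆ range(|A|^{1/2}). Then all four reduced solutions exist: E of V_A Y = T₂₁, F of |A|^{1/2}Y = T₁₂*, Ẽ of |A*|^{1/2}Z = T₂₁, and F̃ of V_A* Z = T₁₂*; and moreover F*∘E = F̃*∘Ẽ in B(G,G'). -/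
/-- `|T|^α = (T*T)^{α/2}` defined via the continuous functional calculus. -/
noncomputable def absPow {H K : Type*} [NormedAddCommGroup H] [InnerProductSpace ℂ H]
    [NormedAddCommGroup K] [InnerProductSpace ℂ K] [CompleteSpace H] [CompleteSpace K]
    (T : H →L[ℂ] K) (α : ℝ) : H →L[ℂ] H :=
  CFC.rpow ((ContinuousLinearMap.adjoint T).comp T) (α / 2)

/-- `D` is the reduced solution of the system `A X = C`. -/
def IsReducedSolution {E H K : Type*}
    [NormedAddCommGroup E] [InnerProductSpace ℂ E] [CompleteSpace E]
    [NormedAddCommGroup H] [InnerProductSpace ℂ H] [CompleteSpace H]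
    [NormedAddCommGroup K] [InnerProductSpace ℂ K] [CompleteSpace K]
    (A : H →L[ℂ] K) (C : E →L[ℂ] K) (D : E →L[ℂ] H) : Prop :=
  A.comp D = C ∧ Set.range D ⊆ closure (Set.range (ContinuousLinearMap.adjoint A))

/-!
Write `S = |A*|^{1/2}`, `P = |A|^{1/2}` and `V = V_A`, so `V` is the reduced solution of `S X = A`.
Cancelling `S` twice in `S V A* = A A* = S⁴`, by uniqueness of reduced solutions, gives
`V V* = S²`; then `(V* V)² = V* S² V = A* A`. Hence `S = |V*|` and `P = |V|`, and the partial
isometry `W` of the polar decomposition of `V` intertwines the four equations: once `Ẽ` and `F` are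
known, `E = W* Ẽ` and `F̃ = W F`, so that `F* E = F* W* Ẽ = F̃* Ẽ`.
-/

section Douglas

open ContinuousLinearMap

variable {𝕜 E H K L : Type*} [RCLike 𝕜] [NormedAddCommGroup H] [InnerProductSpace 𝕜 H]

theorem injOn_orthogonal_ker [AddCommGroup K] [Module 𝕜 K] [TopologicalSpace K] (A : H →L[𝕜] K) :
    Set.InjOn A A.kerᗮ :=
  LinearMap.injOn_of_disjoint_ker subset_rfl A.ker.orthogonal_disjoint.symm

variable [CompleteSpace H]

theorem exists_comp_eq_of_range_subset
    [NormedAddCommGroup E] [NormedSpace 𝕜 E] [CompleteSpace E]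
    [AddCommGroup K] [Module 𝕜 K] [TopologicalSpace K] [T2Space K]
    {A : H →L[𝕜] K} {C : E →L[𝕜] K} (h : Set.range C ⊆ Set.range A) :
    ∃ D : E →L[𝕜] H, A.comp D = C ∧ ∀ x, D x ∈ A.kerᗮ := by
  have : CompleteSpace A.ker := A.isClosed_ker.completeSpace_coe
  let e : A.kerᗮ ≃ₗ[𝕜] A.range :=
    A.toLinearMap.kerComplementEquivRange A.ker.isCompl_orthogonal.symm
  let D : E →ₗ[𝕜] A.kerᗮ := e.symm ∘ₗ C.toLinearMap.codRestrict A.range fun x ↦ h ⟨x, rfl⟩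
  have apply_D (x : E) : A (D x) = C x :=
    congrArg Subtype.val (e.apply_symm_apply ⟨C x, h ⟨x, rfl⟩⟩)
  have graph_D : (D.graph : Set (E × A.kerᗮ)) = {p | A p.2 = C p.1} := by
    ext ⟨x, y⟩
    rw [SetLike.mem_coe, LinearMap.mem_graph_iff, Set.mem_ofPred_eq, ← apply_D x,
      (injOn_orthogonal_ker A).eq_iff y.2 (D x).2, Subtype.ext_iff]
  have isClosed_graph_D : IsClosed (D.graph : Set (E × A.kerᗮ)) :=
    graph_D ▸ isClosed_eq (by fun_prop) (by fun_prop)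
  exact ⟨A.kerᗮ.subtypeL.comp (.ofIsClosedGraph isClosed_graph_D), ContinuousLinearMap.ext apply_D,
    fun x ↦ (D x).2⟩

theorem range_adjoint_subset_range_adjoint_of_norm_apply_le
    [NormedAddCommGroup K] [InnerProductSpace 𝕜 K] [CompleteSpace K]
    [NormedAddCommGroup L] [InnerProductSpace 𝕜 L] [CompleteSpace L]
    {V : H →L[𝕜] K} {P : H →L[𝕜] L} {c : ℝ} (h : ∀ x, ‖V x‖ ≤ c * ‖P x‖) :
    Set.range (adjoint V) ⊆ Set.range (adjoint P) := by
  rintro _ ⟨y, rfl⟩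
  have norm_inner_le (x : H) : ‖innerSL 𝕜 y (V x)‖ ≤ ‖y‖ * c * ‖P x‖ :=
    calc ‖innerSL 𝕜 y (V x)‖ ≤ ‖y‖ * ‖V x‖ := norm_inner_le_norm y (V x)
      _ ≤ ‖y‖ * (c * ‖P x‖) := by gcongr; exact h x
      _ = ‖y‖ * c * ‖P x‖ := (mul_assoc _ _ _).symm
  -- `P x ↦ ⟪y, V x⟫` is well defined and bounded on the range of `P`.
  let φ : P.range →L[𝕜] 𝕜 := ((innerSL 𝕜 y).comp V).toLinearMap.compLeftInverse P.toLinearMap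
  obtain ⟨ψ, hψ, -⟩ := exists_extension_norm_eq P.range φ
  refine ⟨(InnerProductSpace.toDual 𝕜 L).symm ψ, ext_inner_right 𝕜 fun x ↦ ?_⟩
  calc inner 𝕜 (adjoint P ((InnerProductSpace.toDual 𝕜 L).symm ψ)) x
      = ψ (P x) := by rw [adjoint_inner_left, InnerProductSpace.toDual_symm_apply]
    _ = inner 𝕜 y (V x) := (hψ ⟨P x, x, rfl⟩).trans <|
        LinearMap.compLeftInverse_apply_of_bdd _ _ ⟨_, norm_inner_le⟩ x _ rfl
    _ = inner 𝕜 (adjoint V y) x := (adjoint_inner_left V x y).symm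

end Douglas

section Hilbert

open ContinuousLinearMap

variable {E G H K L : Type*}
  [NormedAddCommGroup E] [InnerProductSpace ℂ E] [CompleteSpace E]
  [NormedAddCommGroup G] [InnerProductSpace ℂ G] [CompleteSpace G]
  [NormedAddCommGroup H] [InnerProductSpace ℂ H] [CompleteSpace H]
  [NormedAddCommGroup K] [InnerProductSpace ℂ K] [CompleteSpace K]
  [NormedAddCommGroup L] [InnerProductSpace ℂ L] [CompleteSpace L]

theorem isReducedSolution_iff {A : H →L[ℂ] K} {C : E →L[ℂ] K} {D : E →L[ℂ] H} :
    IsReducedSolution A C D ↔ A.comp D = C ∧ ∀ x, D x ∈ A.kerᗮ := by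
  rw [IsReducedSolution, Set.range_subset_iff, orthogonal_ker]
  rfl

theorem exists_isReducedSolution {A : H →L[ℂ] K} {C : E →L[ℂ] K}
    (h : Set.range C ⊆ Set.range A) : ∃ D, IsReducedSolution A C D := by
  simpa only [isReducedSolution_iff] using exists_comp_eq_of_range_subset h

namespace IsReducedSolution

theorem unique {A : H →L[ℂ] K} {C : E →L[ℂ] K} {D₁ D₂ : E →L[ℂ] H}
    (h₁ : IsReducedSolution A C D₁) (h₂ : IsReducedSolution A C D₂) : D₁ = D₂ := by
  rw [isReducedSolution_iff] at h₁ h₂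
  ext x
  exact injOn_orthogonal_ker A (h₁.2 x) (h₂.2 x) (DFunLike.congr_fun (h₁.1.trans h₂.1.symm) x)

theorem comp_right {A : H →L[ℂ] K} {C : E →L[ℂ] K} {D : E →L[ℂ] H}
    (h : IsReducedSolution A C D) (B : G →L[ℂ] E) : IsReducedSolution A (C.comp B) (D.comp B) :=
  ⟨by rw [← comp_assoc, h.1], (Set.range_comp_subset_range B D).trans h.2⟩

theorem comp_left {A : H →L[ℂ] K} {B : L →L[ℂ] K} {C : E →L[ℂ] K} {D : E →L[ℂ] H}
    {U : H →L[ℂ] L} (h : IsReducedSolution A C D) (hBU : B.comp U = A)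
    (hUA : U.comp (adjoint A) = adjoint B) : IsReducedSolution B C (U.comp D) := by
  refine ⟨by rw [← comp_assoc, hBU, h.1], ?_⟩
  calc Set.range (U.comp D) = U '' Set.range D := Set.range_comp U D
    _ ⊆ U '' closure (Set.range (adjoint A)) := Set.image_mono h.2
    _ ⊆ closure (U '' Set.range (adjoint A)) := image_closure_subset_closure_image U.continuous
    _ = closure (Set.range (adjoint B)) := by rw [← Set.range_comp, ← hUA]; rfl

theorem comp_self_of_isSelfAdjoint {S : H →L[ℂ] H} (hS : IsSelfAdjoint S) :
    IsReducedSolution S (S.comp S) S :=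
  ⟨rfl, by rw [hS.adjoint_eq]; exact subset_closure⟩

theorem of_range_subset_closure_range {S : K →L[ℂ] K} {A V : E →L[ℂ] K} (hS : IsSelfAdjoint S)
    (hSV : S.comp V = A) (hV : Set.range V ⊆ closure (Set.range A)) : IsReducedSolution S A V := by
  refine ⟨hSV, hV.trans (closure_mono ?_)⟩
  rw [hS.adjoint_eq, ← hSV]
  exact Set.range_comp_subset_range V S

theorem comp_adjoint_self {S : K →L[ℂ] K} {A V : H →L[ℂ] K} (h : IsReducedSolution S A V)
    (hS : IsSelfAdjoint S) (hA : A.comp (adjoint A) = (S.comp S).comp (S.comp S)) :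
    V.comp (adjoint V) = S.comp S := by
  have comp_adjoint_A : V.comp (adjoint A) = S.comp (S.comp S) :=
    unique (hA ▸ h.comp_right (adjoint A))
      ((comp_self_of_isSelfAdjoint hS).comp_right (S.comp S))
  have A_comp_adjoint : A.comp (adjoint V) = (S.comp S).comp S := by
    simpa only [adjoint_comp, adjoint_adjoint, hS.adjoint_eq] using congrArg adjoint comp_adjoint_A
  exact unique (A_comp_adjoint ▸ h.comp_right (adjoint V))
    ((comp_self_of_isSelfAdjoint hS).comp_right S)

theorem adjoint_comp_self_comp_self {S : K →L[ℂ] K} {A V : H →L[ℂ] K}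
    (h : IsReducedSolution S A V) (hS : IsSelfAdjoint S)
    (hA : A.comp (adjoint A) = (S.comp S).comp (S.comp S)) :
    ((adjoint V).comp V).comp ((adjoint V).comp V) = (adjoint A).comp A :=
  calc ((adjoint V).comp V).comp ((adjoint V).comp V)
      = (adjoint V).comp ((V.comp (adjoint V)).comp V) := rfl
    _ = ((adjoint V).comp S).comp (S.comp V) := by rw [h.comp_adjoint_self hS hA]; rfl
    _ = (adjoint A).comp A := by rw [← h.1, adjoint_comp, hS.adjoint_eq]

end IsReducedSolution

theorem adjoint_comp_self_nonneg (T : H →L[ℂ] K) : 0 ≤ (adjoint T).comp T :=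
  (nonneg_iff_isPositive _).2 (isPositive_adjoint_comp_self T)

theorem absPow_nonneg (T : H →L[ℂ] K) (α : ℝ) : 0 ≤ absPow T α :=
  CFC.rpow_nonneg

theorem isSelfAdjoint_absPow (T : H →L[ℂ] K) (α : ℝ) : IsSelfAdjoint (absPow T α) :=
  (absPow_nonneg T α).isSelfAdjoint

theorem absPow_two (T : H →L[ℂ] K) : absPow T 2 = (adjoint T).comp T := by
  rw [absPow, div_self two_ne_zero]
  exact CFC.rpow_one _ (adjoint_comp_self_nonneg T)

theorem sqrt_absPow (T : H →L[ℂ] K) {α : ℝ} (hα : 0 ≤ α) :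
    CFC.sqrt (absPow T α) = absPow T (α / 2) :=
  CFC.sqrt_rpow_nnreal (x := ⟨α / 2, by positivity⟩)

theorem absPow_half_comp_self (T : H →L[ℂ] K) {α : ℝ} (hα : 0 ≤ α) :
    (absPow T (α / 2)).comp (absPow T (α / 2)) = absPow T α := by
  rw [← sqrt_absPow T hα]
  exact CFC.sqrt_mul_sqrt_self _ (absPow_nonneg T α)

theorem absPow_one_comp_self (T : H →L[ℂ] K) :
    (absPow T 1).comp (absPow T 1) = (adjoint T).comp T := by
  simpa only [div_self (two_ne_zero' ℝ), absPow_two] using absPow_half_comp_self T zero_le_two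

theorem eq_absPow_half {T : H →L[ℂ] K} {α : ℝ} {B : H →L[ℂ] H} (hα : 0 ≤ α) (hB : 0 ≤ B)
    (h : B.comp B = absPow T α) : B = absPow T (α / 2) := by
  rw [← sqrt_absPow T hα]
  exact (CFC.sqrt_unique h hB).symm

theorem eq_absPow_one {T : H →L[ℂ] K} {B : H →L[ℂ] H} (hB : 0 ≤ B)
    (h : B.comp B = (adjoint T).comp T) : B = absPow T 1 := by
  simpa only [div_self (two_ne_zero' ℝ)] using
    eq_absPow_half zero_le_two hB (h.trans (absPow_two T).symm)

theorem norm_absPow_one_apply (T : H →L[ℂ] K) (x : H) : ‖absPow T 1 x‖ = ‖T x‖ := by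
  rw [← sq_eq_sq₀ (norm_nonneg _) (norm_nonneg _), apply_norm_sq_eq_inner_adjoint_left,
    apply_norm_sq_eq_inner_adjoint_left, (isSelfAdjoint_absPow T 1).adjoint_eq,
    absPow_one_comp_self]

/-- `W` is the partial isometry of the polar decomposition `V = W|V|`, vanishing on `ker V`. Since
`IsReducedSolution` concerns equations with the unknown on the right, this is expressed through the
adjoint: `W*` is the reduced solution of `|V| X = V*`. -/
def IsPolarFactor (V W : H →L[ℂ] K) : Prop :=
  IsReducedSolution (absPow V 1) (adjoint V) (adjoint W)

theorem exists_isPolarFactor (V : H →L[ℂ] K) : ∃ W, IsPolarFactor V W := by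
  have range_adjoint_subset : Set.range (adjoint V) ⊆ Set.range (absPow V 1) := by
    rw [← (isSelfAdjoint_absPow V 1).adjoint_eq]
    exact range_adjoint_subset_range_adjoint_of_norm_apply_le (c := 1) fun x ↦ by
      rw [one_mul, norm_absPow_one_apply]
  obtain ⟨X, hX⟩ := exists_isReducedSolution range_adjoint_subset
  exact ⟨adjoint X, by rwa [IsPolarFactor, adjoint_adjoint]⟩

namespace IsPolarFactor

variable {V W : H →L[ℂ] K}

theorem factor_comp_absPow (h : IsPolarFactor V W) : W.comp (absPow V 1) = V := by
  simpa only [adjoint_comp, adjoint_adjoint, (isSelfAdjoint_absPow V 1).adjoint_eq] using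
    congrArg adjoint h.1

theorem adjoint_factor_comp (h : IsPolarFactor V W) : (adjoint W).comp V = absPow V 1 :=
  (h.comp_right V).unique <| by
    rw [← absPow_one_comp_self]
    exact .comp_self_of_isSelfAdjoint (isSelfAdjoint_absPow V 1)

theorem adjoint_comp_factor (h : IsPolarFactor V W) : (adjoint V).comp W = absPow V 1 := by
  simpa only [adjoint_comp, adjoint_adjoint, (isSelfAdjoint_absPow V 1).adjoint_eq] using
    congrArg adjoint h.adjoint_factor_comp

theorem comp_adjoint_factor (h : IsPolarFactor V W) :
    V.comp (adjoint W) = absPow (adjoint V) 1 := by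
  refine eq_absPow_one ?_ ?_
  · rw [← h.factor_comp_absPow, nonneg_iff_isPositive]
    exact ((nonneg_iff_isPositive _).1 (absPow_nonneg V 1)).conj_adjoint W
  · calc (V.comp (adjoint W)).comp (V.comp (adjoint W))
        = (V.comp ((adjoint W).comp V)).comp (adjoint W) := rfl
      _ = V.comp ((absPow V 1).comp (adjoint W)) := by rw [h.adjoint_factor_comp]; rfl
      _ = (adjoint (adjoint V)).comp (adjoint V) := by rw [h.1, adjoint_adjoint]

theorem absPow_adjoint_comp_factor (h : IsPolarFactor V W) : (absPow (adjoint V) 1).comp W = V :=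
  calc (absPow (adjoint V) 1).comp W
      = (adjoint (V.comp (adjoint W))).comp W := by
        rw [h.comp_adjoint_factor, (isSelfAdjoint_absPow _ 1).adjoint_eq]
    _ = W.comp (adjoint ((adjoint W).comp V)) := by
        simp only [adjoint_comp, adjoint_adjoint, comp_assoc]
    _ = V := by
        rw [h.adjoint_factor_comp, (isSelfAdjoint_absPow V 1).adjoint_eq, h.factor_comp_absPow]

end IsPolarFactor

theorem absPow_adjoint_half_comp_self_comp_self (A : H →L[ℂ] K) :
    ((absPow (adjoint A) (1 / 2)).comp (absPow (adjoint A) (1 / 2))).comp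
      ((absPow (adjoint A) (1 / 2)).comp (absPow (adjoint A) (1 / 2))) = A.comp (adjoint A) := by
  rw [absPow_half_comp_self _ zero_le_one, absPow_one_comp_self, adjoint_adjoint]

namespace IsReducedSolution

variable {A V : H →L[ℂ] K}

theorem absPow_adjoint_half_eq (h : IsReducedSolution (absPow (adjoint A) (1 / 2)) A V) :
    absPow (adjoint A) (1 / 2) = absPow (adjoint V) 1 := by
  refine eq_absPow_one (absPow_nonneg _ _) ?_
  rw [adjoint_adjoint]
  exact (h.comp_adjoint_self (isSelfAdjoint_absPow _ _)
    (absPow_adjoint_half_comp_self_comp_self A).symm).symm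

theorem absPow_half_eq (h : IsReducedSolution (absPow (adjoint A) (1 / 2)) A V) :
    absPow A (1 / 2) = absPow V 1 := by
  have adjoint_comp_self_eq : (adjoint V).comp V = absPow A 1 :=
    eq_absPow_one (adjoint_comp_self_nonneg V) <|
      h.adjoint_comp_self_comp_self (isSelfAdjoint_absPow _ _)
        (absPow_adjoint_half_comp_self_comp_self A).symm
  exact (eq_absPow_half zero_le_one (absPow_nonneg V 1)
    ((absPow_one_comp_self V).trans adjoint_comp_self_eq)).symm

end IsReducedSolution

end Hilbert

/-- Proposition 5.4 (Hilbert-space case): the range inclusions guarantee that the four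
reduced solutions exist, and `F*E = F̃*Ẽ`. -/
theorem weakly_complementable_of_range_inclusions
    {H K G G' : Type*}
    [NormedAddCommGroup H] [InnerProductSpace ℂ H] [CompleteSpace H]
    [NormedAddCommGroup K] [InnerProductSpace ℂ K] [CompleteSpace K]
    [NormedAddCommGroup G] [InnerProductSpace ℂ G] [CompleteSpace G]
    [NormedAddCommGroup G'] [InnerProductSpace ℂ G'] [CompleteSpace G']
    (A : H →L[ℂ] K)
    -- `V_A` is the (unique) operator with `|A*|^{1/2} V_A = A` and `R(V_A) ⊆ closure R(A)`
    (V_A : H →L[ℂ] K)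
    (hV₁ : (absPow (ContinuousLinearMap.adjoint A) (1/2)).comp V_A = A)
    (hV₂ : Set.range V_A ⊆ closure (Set.range A))
    (hVuniq : ∀ W : H →L[ℂ] K,
      (absPow (ContinuousLinearMap.adjoint A) (1/2)).comp W = A →
      Set.range W ⊆ closure (Set.range A) → W = V_A)
    (T₂₁ : G →L[ℂ] K) (T₁₂s : G' →L[ℂ] H)
    (h₂₁ : Set.range T₂₁ ⊆ Set.range (absPow (ContinuousLinearMap.adjoint A) (1/2)))
    (h₁₂ : Set.range T₁₂s ⊆ Set.range (absPow A (1/2))) :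
    ∃ (E : G →L[ℂ] H) (F : G' →L[ℂ] H) (Et : G →L[ℂ] K) (Ft : G' →L[ℂ] K),
      IsReducedSolution V_A T₂₁ E ∧
      IsReducedSolution (absPow A (1/2)) T₁₂s F ∧
      IsReducedSolution (absPow (ContinuousLinearMap.adjoint A) (1/2)) T₂₁ Et ∧
      IsReducedSolution (ContinuousLinearMap.adjoint V_A) T₁₂s Ft ∧
      (ContinuousLinearMap.adjoint F).comp E = (ContinuousLinearMap.adjoint Ft).comp Et := by
  have hV : IsReducedSolution (absPow (ContinuousLinearMap.adjoint A) (1 / 2)) A V_A :=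
    .of_range_subset_closure_range (isSelfAdjoint_absPow _ _) hV₁ hV₂
  obtain ⟨W, hW⟩ := exists_isPolarFactor V_A
  obtain ⟨F, hF⟩ := exists_isReducedSolution h₁₂
  obtain ⟨Et, hEt⟩ := exists_isReducedSolution h₂₁
  have hE : IsReducedSolution V_A T₂₁ ((ContinuousLinearMap.adjoint W).comp Et) := by
    refine hEt.comp_left ?_ ?_
    · rw [hV.absPow_adjoint_half_eq, hW.comp_adjoint_factor]
    · rw [hV.absPow_adjoint_half_eq, ← ContinuousLinearMap.adjoint_comp,
        hW.absPow_adjoint_comp_factor]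
  have hFt : IsReducedSolution (ContinuousLinearMap.adjoint V_A) T₁₂s (W.comp F) := by
    refine hF.comp_left ?_ ?_
    · rw [hV.absPow_half_eq, hW.adjoint_comp_factor]
    · rw [hV.absPow_half_eq, (isSelfAdjoint_absPow V_A 1).adjoint_eq, hW.factor_comp_absPow,
        ContinuousLinearMap.adjoint_adjoint]
  refine ⟨_, F, Et, _, hE, hF, hEt, hFt, ?_⟩
  rw [ContinuousLinearMap.adjoint_comp, ContinuousLinearMap.comp_assoc]
end

section
/- Let H₁, H₂, K₁, K₂ be complex Hilbert spaces and let T₁₁ ∈ B(H₁,K₁), T₁₂ ∈ B(H₂,K₁), T₂₁ ∈ B(H₁,K₂), T₂₂ ∈ B(H₂,K₂). Let T ∈ B(H₁ ⊕ H₂, K₁ ⊕ K₂) be the block operator T(x,y) = (T₁₁x + T₁₂y, T₂₁x + T₂₂y). Assume range T₂₁ ⊆ range(|T₂₂*|^{1/2}) and range T₁₂* ⊆ range(|T₂₂|^{1/2}), let E be the reduced solution of V_{T₂₂} Y = T₂₁ and F the reduced solution of |T₂₂|^{1/2}Y = T₁₂*, and set Σ = T₁₁ − F*∘E ∈ B(H₁,K₁).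 Then: (1) for every u ∈ K₁, if (u,0) ∈ range T then u ∈ range Σ; and (2) for every x ∈ H₁, the vector (Σx, 0) lies in the norm-closure of range T. -/
/-- The block operator `[[T₁₁, T₁₂],[T₂₁, T₂₂]]` on Hilbert space direct sums. -/
noncomputable def blockCLM {H₁ H₂ K₁ K₂ : Type*}
    [NormedAddCommGroup H₁] [InnerProductSpace ℂ H₁]
    [NormedAddCommGroup H₂] [InnerProductSpace ℂ H₂]
    [NormedAddCommGroup K₁] [InnerProductSpace ℂ K₁]
    [NormedAddCommGroup K₂] [InnerProductSpace ℂ K₂]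
    (T₁₁ : H₁ →L[ℂ] K₁) (T₁₂ : H₂ →L[ℂ] K₁)
    (T₂₁ : H₁ →L[ℂ] K₂) (T₂₂ : H₂ →L[ℂ] K₂) :
    WithLp 2 (H₁ × H₂) →L[ℂ] WithLp 2 (K₁ × K₂) :=
  ((WithLp.prodContinuousLinearEquiv 2 ℂ K₁ K₂).symm.toContinuousLinearMap.comp
    ((T₁₁.comp (ContinuousLinearMap.fst ℂ H₁ H₂) +
        T₁₂.comp (ContinuousLinearMap.snd ℂ H₁ H₂)).prod
      (T₂₁.comp (ContinuousLinearMap.fst ℂ H₁ H₂) +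
        T₂₂.comp (ContinuousLinearMap.snd ℂ H₁ H₂)))).comp
    (WithLp.prodContinuousLinearEquiv 2 ℂ H₁ H₂).toContinuousLinearMap

/-!
For every `α > 0` the power `P = |T₂₂|^α` has the kernel of `T₂₂`, and `|T₂₂*|^α T₂₂ = T₂₂ |T₂₂|^α`
because the continuous functional calculus respects intertwining relations. Since `|T₂₂*|^α` is
injective on the closure of the range of `T₂₂`, this forces `T₂₂ = V P` and `ker V = ker T₂₂`.
Together with `T₁₂ = F* P` and `T₂₁ = V E` the block operator becomes
`T(x, y) = (T₁₁ x + F* (P y), V (E x + P y))`, where `E x` lies in the closure of the range of `P`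
and `V` is injective on that closure. Hence a vanishing second component means `E x = -P y`, so
that the first component is `Σ x`; conversely, letting `P y` tend to `-E x` approximates `(Σ x, 0)`.
-/

section Intertwining

open ContinuousLinearMap

variable {H K : Type*} [NormedAddCommGroup H] [InnerProductSpace ℂ H] [CompleteSpace H]
  [NormedAddCommGroup K] [InnerProductSpace ℂ K] [CompleteSpace K]
  {A : H →L[ℂ] H} {B : K →L[ℂ] K} {T : H →L[ℂ] K}

theorem cfcHomSuperset_comp_eq_comp_cfcHomSuperset (hA : IsSelfAdjoint A) (hB : IsSelfAdjoint B)
    (h : B ∘L T = T ∘L A) {s : Set ℝ} [CompactSpace s]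
    (hAs : spectrum ℝ A ⊆ s) (hBs : spectrum ℝ B ⊆ s) (f : C(s, ℝ)) :
    cfcHomSuperset hB hBs f ∘L T = T ∘L cfcHomSuperset hA hAs f := by
  induction f using ContinuousMap.induction_on_of_compact with
  | const r =>
    have hconst : ContinuousMap.const s r = algebraMap ℝ C(s, ℝ) r := rfl
    simp only [hconst, AlgHomClass.commutes]
    ext x
    simp [Algebra.algebraMap_eq_smul_one]
  | id => simpa only [cfcHomSuperset_id] using h
  | star_id => simpa only [star_trivial, cfcHomSuperset_id] using h
  | add f g hf hg => simp only [map_add, add_comp, comp_add, hf, hg]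
  | mul f g hf hg => simp only [map_mul, mul_def, comp_assoc, hg, ← comp_assoc T, ← hf]
  | frequently f hf =>
    have hclosed : IsClosed {g : C(s, ℝ) |
        cfcHomSuperset hB hBs g ∘L T = T ∘L cfcHomSuperset hA hAs g} :=
      isClosed_eq ((cfcHomSuperset_continuous hB hBs).clm_comp_const T)
        ((cfcHomSuperset_continuous hA hAs).const_clm_comp T)
    exact hclosed.mem_of_frequently_of_tendsto hf Filter.tendsto_id

theorem cfc_comp_eq_comp_cfc (hA : IsSelfAdjoint A) (hB : IsSelfAdjoint B)
    (h : B ∘L T = T ∘L A) {f : ℝ → ℝ} (hf : ContinuousOn f (spectrum ℝ A ∪ spectrum ℝ B)) :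
    cfc f B ∘L T = T ∘L cfc f A := by
  have : CompactSpace ↑(spectrum ℝ A ∪ spectrum ℝ B) :=
    isCompact_iff_compactSpace.mp <|
      (ContinuousFunctionalCalculus.isCompact_spectrum A).union
        (ContinuousFunctionalCalculus.isCompact_spectrum B)
  rw [cfc_apply f A hA (hf.mono Set.subset_union_left),
    cfc_apply f B hB (hf.mono Set.subset_union_right)]
  exact cfcHomSuperset_comp_eq_comp_cfcHomSuperset hA hB h Set.subset_union_left
    Set.subset_union_right ⟨_, hf.domRestrict⟩

theorem rpow_comp_eq_comp_rpow (hA : 0 ≤ A) (hB : 0 ≤ B) (h : B ∘L T = T ∘L A) {r : ℝ}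
    (hr : 0 ≤ r) : (B ^ r) ∘L T = T ∘L (A ^ r) := by
  rw [CFC.rpow_eq_cfc_real hA, CFC.rpow_eq_cfc_real hB]
  exact cfc_comp_eq_comp_cfc (.of_nonneg hA) (.of_nonneg hB) h
    (Real.continuous_rpow_const hr).continuousOn

theorem ker_le_ker_rpow (hA : 0 ≤ A) {r : ℝ} (hr : 0 < r) : A.ker ≤ (A ^ r).ker := by
  intro x hx
  -- `A x = 0` says that `c ↦ c • x` intertwines `0` on `ℂ` with `A`, and `0 ^ r = 0`.
  have hzero : A ∘L toSpanSingleton ℂ x = toSpanSingleton ℂ x ∘L 0 := by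
    ext
    simpa using hx
  have hrpow := rpow_comp_eq_comp_rpow le_rfl hA hzero hr.le
  have hzero_rpow : (0 : ℂ →L[ℂ] ℂ) ^ r = 0 := CFC.zero_rpow hr.ne'
  rw [hzero_rpow] at hrpow
  simpa using DFunLike.congr_fun hrpow 1

theorem ker_rpow (hA : 0 ≤ A) {r : ℝ} (hr : 0 < r) : (A ^ r).ker = A.ker := by
  refine le_antisymm ?_ (ker_le_ker_rpow hA hr)
  calc (A ^ r).ker ≤ ((A ^ r) ^ r⁻¹).ker := ker_le_ker_rpow CFC.rpow_nonneg (inv_pos.mpr hr)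
    _ = A.ker := by
      rw [CFC.rpow_rpow_of_exponent_nonneg A r r⁻¹ hr.le (inv_nonneg.mpr hr.le) hA,
        mul_inv_cancel₀ hr.ne', CFC.rpow_one A hA]

end Intertwining

section Adjoint

open ContinuousLinearMap
open scoped InnerProduct

variable {𝕜 H K L : Type*} [RCLike 𝕜]
  [NormedAddCommGroup H] [InnerProductSpace 𝕜 H] [CompleteSpace H]
  [NormedAddCommGroup K] [InnerProductSpace 𝕜 K] [CompleteSpace K]
  [NormedAddCommGroup L] [InnerProductSpace 𝕜 L] [CompleteSpace L]

theorem adjoint_comp_self_nonneg_s6 (A : H →L[𝕜] K) : 0 ≤ A† ∘L A :=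
  (nonneg_iff_isPositive _).mpr (isPositive_adjoint_comp_self A)

theorem closure_range_adjoint (A : H →L[𝕜] K) : closure (Set.range (A†)) = (A.kerᗮ : Set H) := by
  rw [A.orthogonal_ker, Submodule.topologicalClosure_coe, LinearMap.coe_range, coe_coe]

theorem closure_range_adjoint_congr {A : H →L[𝕜] K} {B : H →L[𝕜] L} (h : A.ker = B.ker) :
    closure (Set.range (A†)) = closure (Set.range (B†)) := by
  rw [closure_range_adjoint, closure_range_adjoint, h]

theorem injOn_closure_range_adjoint (A : H →L[𝕜] K) : Set.InjOn A (closure (Set.range (A†))) := by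
  rw [closure_range_adjoint]
  exact LinearMap.disjoint_ker_iff_injOn.mp A.ker.orthogonal_disjoint.symm

end Adjoint

section AbsPow

open ContinuousLinearMap
open scoped InnerProduct

variable {H K : Type*} [NormedAddCommGroup H] [InnerProductSpace ℂ H] [CompleteSpace H]
  [NormedAddCommGroup K] [InnerProductSpace ℂ K] [CompleteSpace K]
  {T V : H →L[ℂ] K} {α : ℝ}

theorem adjoint_absPow (T : H →L[ℂ] K) (α : ℝ) : (absPow T α)† = absPow T α :=
  (IsSelfAdjoint.of_nonneg (CFC.rpow_nonneg (a := T† ∘L T))).adjoint_eq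

theorem ker_absPow (T : H →L[ℂ] K) (hα : 0 < α) : (absPow T α).ker = T.ker :=
  (ker_rpow (adjoint_comp_self_nonneg_s6 T) (half_pos hα)).trans T.ker_adjoint_comp_self

theorem absPow_adjoint_comp (T : H →L[ℂ] K) (hα : 0 ≤ α) :
    absPow (T†) α ∘L T = T ∘L absPow T α := by
  refine rpow_comp_eq_comp_rpow (adjoint_comp_self_nonneg_s6 T) (adjoint_comp_self_nonneg_s6 (T†)) ?_
    (by positivity)
  rw [adjoint_adjoint, comp_assoc]

theorem closure_range_absPow (T : H →L[ℂ] K) (hα : 0 < α) :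
    closure (Set.range (absPow T α)) = closure (Set.range (T†)) := by
  rw [← closure_range_adjoint_congr (ker_absPow T hα), adjoint_absPow]

theorem injOn_absPow_adjoint (T : H →L[ℂ] K) (hα : 0 < α) :
    Set.InjOn (absPow (T†) α) (closure (Set.range T)) := by
  have h := injOn_closure_range_adjoint (absPow (T†) α)
  rwa [adjoint_absPow, closure_range_absPow (T†) hα, adjoint_adjoint] at h

theorem ker_eq_of_absPow_adjoint_comp_eq (hα : 0 < α) (hV : absPow (T†) α ∘L V = T)
    (hVT : Set.range V ⊆ closure (Set.range T)) : V.ker = T.ker := by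
  ext x
  have hx : absPow (T†) α (V x) = T x := DFunLike.congr_fun hV x
  have hzero : (0 : K) ∈ closure (Set.range T) := subset_closure ⟨0, map_zero T⟩
  have hinj := (injOn_absPow_adjoint T hα).eq_iff (hVT ⟨x, rfl⟩) hzero
  rw [map_zero, hx] at hinj
  exact hinj.symm

theorem comp_absPow_eq_of_absPow_adjoint_comp_eq (hα : 0 < α) (hV : absPow (T†) α ∘L V = T)
    (hVT : Set.range V ⊆ closure (Set.range T)) : V ∘L absPow T α = T := by
  ext x
  refine injOn_absPow_adjoint T hα (hVT ⟨_, rfl⟩) (subset_closure ⟨x, rfl⟩) ?_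
  calc absPow (T†) α (V (absPow T α x)) = T (absPow T α x) := DFunLike.congr_fun hV _
    _ = absPow (T†) α (T x) := (DFunLike.congr_fun (absPow_adjoint_comp T hα.le) x).symm

end AbsPow

section Factorization

variable {H₁ H₂ K₁ K₂ L : Type*}
  [NormedAddCommGroup H₁] [InnerProductSpace ℂ H₁] [NormedAddCommGroup H₂] [InnerProductSpace ℂ H₂]
  [NormedAddCommGroup K₁] [InnerProductSpace ℂ K₁] [NormedAddCommGroup K₂] [InnerProductSpace ℂ K₂]
  [AddCommGroup L] [Module ℂ L] [TopologicalSpace L]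
  (T : H₁ →L[ℂ] K₁) (G : L →L[ℂ] K₁) (V : L →L[ℂ] K₂) {E : H₁ →L[ℂ] L} {P : H₂ →L[ℂ] L}

theorem mem_range_sub_comp_of_mem_range_blockCLM
    (hV : Set.InjOn V (closure (Set.range P))) (hE : Set.range E ⊆ closure (Set.range P)) {u : K₁}
    (hu : WithLp.toLp 2 (u, 0) ∈ Set.range (blockCLM T (G ∘L P) (V ∘L E) (V ∘L P))) :
    u ∈ Set.range (T - G ∘L E) := by
  obtain ⟨z, hz⟩ := hu
  have hfst : T z.fst + G (P z.snd) = u := congrArg WithLp.fst hz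
  have hsnd : V (E z.fst) + V (P z.snd) = 0 := congrArg WithLp.snd hz
  have hEP : E z.fst = P (-z.snd) :=
    hV (hE ⟨_, rfl⟩) (subset_closure ⟨_, rfl⟩) <| by
      rw [map_neg, map_neg, eq_neg_of_add_eq_zero_left hsnd]
  refine ⟨z.fst, ?_⟩
  calc (T - G ∘L E) z.fst = T z.fst - G (P (-z.snd)) := by simp [hEP]
    _ = u := by rw [map_neg, map_neg, sub_neg_eq_add, hfst]

theorem toLp_sub_comp_mem_closure_range_blockCLM
    (hE : Set.range E ⊆ closure (Set.range P)) (x : H₁) :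
    WithLp.toLp 2 ((T - G ∘L E) x, 0) ∈
      closure (Set.range (blockCLM T (G ∘L P) (V ∘L E) (V ∘L P))) := by
  let column (w : L) : WithLp 2 (K₁ × K₂) := WithLp.toLp 2 (T x - G w, V (E x) - V w)
  have hcolumn : Continuous column := by fun_prop
  have hmaps : Set.MapsTo column (Set.range P)
      (Set.range (blockCLM T (G ∘L P) (V ∘L E) (V ∘L P))) := by
    rintro _ ⟨y, rfl⟩
    refine ⟨WithLp.toLp 2 (x, -y), ?_⟩
    simp [column, blockCLM, sub_eq_add_neg]
  simpa [column] using map_mem_closure hcolumn (hE ⟨x, rfl⟩) hmaps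

end Factorization

theorem range_shorted_operator_of_weakly_complementable_general
    {H₁ H₂ K₁ K₂ : Type*}
    [NormedAddCommGroup H₁] [InnerProductSpace ℂ H₁] [CompleteSpace H₁]
    [NormedAddCommGroup H₂] [InnerProductSpace ℂ H₂] [CompleteSpace H₂]
    [NormedAddCommGroup K₁] [InnerProductSpace ℂ K₁] [CompleteSpace K₁]
    [NormedAddCommGroup K₂] [InnerProductSpace ℂ K₂] [CompleteSpace K₂]
    {α : ℝ} (hα : 0 < α) (T₁₁ : H₁ →L[ℂ] K₁) {T₁₂ : H₂ →L[ℂ] K₁}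
    {T₂₁ : H₁ →L[ℂ] K₂} {T₂₂ : H₂ →L[ℂ] K₂} {V : H₂ →L[ℂ] K₂}
    (hV : (absPow (ContinuousLinearMap.adjoint T₂₂) α).comp V = T₂₂)
    (hVT : Set.range V ⊆ closure (Set.range T₂₂))
    {E : H₁ →L[ℂ] H₂} (hE : IsReducedSolution V T₂₁ E)
    {F : K₁ →L[ℂ] H₂} (hF : (absPow T₂₂ α).comp F = ContinuousLinearMap.adjoint T₁₂) :
    (∀ u : K₁,
      (WithLp.equiv 2 (K₁ × K₂)).symm (u, 0) ∈ Set.range (blockCLM T₁₁ T₁₂ T₂₁ T₂₂) →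
      u ∈ Set.range (T₁₁ - (ContinuousLinearMap.adjoint F).comp E)) ∧
    (∀ x : H₁,
      (WithLp.equiv 2 (K₁ × K₂)).symm ((T₁₁ - (ContinuousLinearMap.adjoint F).comp E) x, 0) ∈
        closure (Set.range (blockCLM T₁₁ T₁₂ T₂₁ T₂₂))) := by
  have hVP : V ∘L absPow T₂₂ α = T₂₂ := comp_absPow_eq_of_absPow_adjoint_comp_eq hα hV hVT
  have hFP : ContinuousLinearMap.adjoint F ∘L absPow T₂₂ α = T₁₂ := by
    rw [← adjoint_absPow, ← ContinuousLinearMap.adjoint_comp, hF,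
      ContinuousLinearMap.adjoint_adjoint]
  have hclosure : closure (Set.range (ContinuousLinearMap.adjoint V)) =
      closure (Set.range (absPow T₂₂ α)) := by
    rw [closure_range_absPow T₂₂ hα,
      closure_range_adjoint_congr (ker_eq_of_absPow_adjoint_comp_eq hα hV hVT)]
  have hEP : Set.range E ⊆ closure (Set.range (absPow T₂₂ α)) := hclosure ▸ hE.2
  have hVinj : Set.InjOn V (closure (Set.range (absPow T₂₂ α))) :=
    hclosure ▸ injOn_closure_range_adjoint V
  have hblock : blockCLM T₁₁ T₁₂ T₂₁ T₂₂ = blockCLM T₁₁ (ContinuousLinearMap.adjoint F ∘L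
      absPow T₂₂ α) (V ∘L E) (V ∘L absPow T₂₂ α) := by rw [hFP, hE.1, hVP]
  rw [hblock]
  exact ⟨fun _ => mem_range_sub_comp_of_mem_range_blockCLM T₁₁ _ V hVinj hEP,
    toLp_sub_comp_mem_closure_range_blockCLM T₁₁ _ V hEP⟩

/-- Hilbert-space case of Proposition 5.6:
`R(T) ∩ N ⊆ R(T_{/(M,N)}) ⊆ closure (R(T)) ∩ N`, stated for the nonzero block
`Σ = T₁₁ - F*E` of the bilateral shorted operator. -/
theorem range_shorted_operator_of_weakly_complementable
    {H₁ H₂ K₁ K₂ : Type*}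
    [NormedAddCommGroup H₁] [InnerProductSpace ℂ H₁] [CompleteSpace H₁]
    [NormedAddCommGroup H₂] [InnerProductSpace ℂ H₂] [CompleteSpace H₂]
    [NormedAddCommGroup K₁] [InnerProductSpace ℂ K₁] [CompleteSpace K₁]
    [NormedAddCommGroup K₂] [InnerProductSpace ℂ K₂] [CompleteSpace K₂]
    (T₁₁ : H₁ →L[ℂ] K₁) (T₁₂ : H₂ →L[ℂ] K₁)
    (T₂₁ : H₁ →L[ℂ] K₂) (T₂₂ : H₂ →L[ℂ] K₂)
    -- the range inclusions (weak complementability)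
    (h₂₁ : Set.range T₂₁ ⊆ Set.range (absPow (ContinuousLinearMap.adjoint T₂₂) (1/2)))
    (h₁₂ : Set.range (ContinuousLinearMap.adjoint T₁₂) ⊆ Set.range (absPow T₂₂ (1/2)))
    -- `V` is the (unique) operator with `|T₂₂*|^{1/2} V = T₂₂` and `R(V) ⊆ closure R(T₂₂)`
    (V : H₂ →L[ℂ] K₂)
    (hV₁ : (absPow (ContinuousLinearMap.adjoint T₂₂) (1/2)).comp V = T₂₂)
    (hV₂ : Set.range V ⊆ closure (Set.range T₂₂))
    (hVuniq : ∀ W : H₂ →L[ℂ] K₂,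
      (absPow (ContinuousLinearMap.adjoint T₂₂) (1/2)).comp W = T₂₂ →
      Set.range W ⊆ closure (Set.range T₂₂) → W = V)
    -- the reduced solutions `E` and `F`
    (E : H₁ →L[ℂ] H₂) (hE : IsReducedSolution V T₂₁ E)
    (F : K₁ →L[ℂ] H₂)
    (hF : IsReducedSolution (absPow T₂₂ (1/2)) (ContinuousLinearMap.adjoint T₁₂) F) :
    (∀ u : K₁,
      (WithLp.equiv 2 (K₁ × K₂)).symm (u, 0) ∈ Set.range (blockCLM T₁₁ T₁₂ T₂₁ T₂₂) →
      u ∈ Set.range (T₁₁ - (ContinuousLinearMap.adjoint F).comp E)) ∧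
    (∀ x : H₁,
      (WithLp.equiv 2 (K₁ × K₂)).symm ((T₁₁ - (ContinuousLinearMap.adjoint F).comp E) x, 0) ∈
        closure (Set.range (blockCLM T₁₁ T₁₂ T₂₁ T₂₂))) :=
  range_shorted_operator_of_weakly_complementable_general one_half_pos T₁₁ hV₁ hV₂ hE hF.1
end
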